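/- Let n ≥ 1 be an integer and let ξ ∈ F_q((T^{-1})) be algebraic over F_q(T) of degree d. Then w_n(ξ) ≤ d − 1 and w_n*(ξ) ≤ d − 1. -/

import Mathlib

open Polynomial Filter
open scoped ENNReal

noncomputable section

namespace Ooto

variable (Fq : Type) [Field Fq] [Fintype Fq]

/-- `F_q((T⁻¹))`, realized as formal Laurent series in the variable `X = T⁻¹`. -/
abbrev K := LaurentSeries Fq

/-- The element `T = X⁻¹` of `F_q((T⁻¹))`. -/
def TT : K Fq := HahnSeries.single (-1 : ℤ) (1 : Fq)

/-- The natural embedding of `F_q[T]` into `F_q((T⁻¹))`, sending `T` to `T`. -/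
def polyToK : Polynomial Fq →+* K Fq := Polynomial.eval₂RingHom HahnSeries.C (TT Fq)

open Classical in
/-- The absolute value on `F_q((T⁻¹))`: `|0| = 0` and `|ξ| = q^{-N}` where `N` is the order
of `ξ` as a series in `T⁻¹`. -/
def kabs (f : K Fq) : ℝ := if f = 0 then 0 else (Fintype.card Fq : ℝ) ^ (-f.order)

/-- A fixed algebraic closure of `F_q((T⁻¹))`. -/
abbrev L := AlgebraicClosure (K Fq)

def toL : K Fq →+* L Fq := algebraMap (K Fq) (L Fq)

def φ : Polynomial Fq →+* L Fq := (toL Fq).comp (polyToK Fq)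

/-- Evaluation of `P ∈ (F_q[T])[X]` at `ξ ∈ F_q((T⁻¹))`. -/
def evalK (P : Polynomial (Polynomial Fq)) (ξ : K Fq) : K Fq :=
  Polynomial.eval₂ (polyToK Fq) ξ P

/-- Evaluation of `P ∈ (F_q[T])[X]` at a point of the algebraic closure. -/
def evalL (P : Polynomial (Polynomial Fq)) (α : L Fq) : L Fq :=
  Polynomial.eval₂ (φ Fq) α P

/-- Height of a polynomial over `F_q[T]`: the maximum of the absolute values of its
coefficients. -/
def Hpoly (P : Polynomial (Polynomial Fq)) : ℝ := ⨆ i : ℕ, kabs Fq (polyToK Fq (P.coeff i))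

/-- `P` is the minimal polynomial of `α`: a non-constant irreducible primitive polynomial in
`(F_q[T])[X]` whose leading coefficient is monic in `T`, vanishing at `α`. -/
def IsMinPolyOf (P : Polynomial (Polynomial Fq)) (α : L Fq) : Prop :=
  0 < P.natDegree ∧ Irreducible P ∧ P.IsPrimitive ∧ (P.leadingCoeff).Monic ∧ evalL Fq P α = 0

/-- `α` is algebraic over `F_q(T)`. -/
def IsAlgElem (α : L Fq) : Prop := ∃ P, IsMinPolyOf Fq P α

open Classical in
/-- The minimal polynomial of an algebraic element (junk value `0` otherwise). -/
def minPolyPrim (α : L Fq) : Polynomial (Polynomial Fq) :=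
  if h : IsAlgElem Fq α then h.choose else 0

/-- Degree of an algebraic element. -/
def degAlg (α : L Fq) : ℕ := (minPolyPrim Fq α).natDegree

/-- Height of an algebraic element. -/
def heightAlg (α : L Fq) : ℝ := Hpoly Fq (minPolyPrim Fq α)

/-- Inseparable degree of a polynomial `P ∈ (F_q[T])[X]`: the largest power `f = p^j` of the
characteristic such that `P(X) = R(X^f)` for some `R`. -/
def insepDeg (P : Polynomial (Polynomial Fq)) : ℕ :=
  (ringChar Fq) ^ sSup {j : ℕ | ∃ R : Polynomial (Polynomial Fq),
    P = R.comp (Polynomial.X ^ (ringChar Fq) ^ j)}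

/-- Inseparable degree of an algebraic element. -/
def insepAlg (α : L Fq) : ℕ := insepDeg Fq (minPolyPrim Fq α)

/-- `α'` is the Galois conjugate of the quadratic element `α` (equal to `α` itself in the
inseparable case): the minimal polynomial of `α` factors as `A(X - α)(X - α')`. -/
def IsConjOf (α' α : L Fq) : Prop :=
  (minPolyPrim Fq α).natDegree = 2 ∧
  (minPolyPrim Fq α).map (φ Fq) =
    Polynomial.C (φ Fq (minPolyPrim Fq α).leadingCoeff) *
      (Polynomial.X - Polynomial.C α) * (Polynomial.X - Polynomial.C α')

/-- `v` is an absolute value on the algebraic closure of `F_q((T⁻¹))` extending `kabs`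
(such an extension exists and is unique). -/
structure IsAbsExt (v : L Fq → ℝ) : Prop where
  eq_zero_iff : ∀ x, v x = 0 ↔ x = 0
  map_mul : ∀ x y, v (x * y) = v x * v y
  add_le : ∀ x y, v (x + y) ≤ max (v x) (v y)
  nonneg : ∀ x, 0 ≤ v x
  extends_kabs : ∀ f : K Fq, v (toL Fq f) = kabs Fq f

/-- The exponent `w_n(ξ)`: the supremum of the real numbers `w` such that
`0 < |P(ξ)| ≤ H(P)^{-w}` for infinitely many `P ∈ (F_q[T])[X]` of degree at most `n`. -/
def wExp (n : ℕ) (ξ : K Fq) : EReal :=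
  sSup {x : EReal | ∃ w : ℝ, x = (w : EReal) ∧
    {P : Polynomial (Polynomial Fq) | P.natDegree ≤ n ∧ 0 < kabs Fq (evalK Fq P ξ) ∧
      kabs Fq (evalK Fq P ξ) ≤ Hpoly Fq P ^ (-w)}.Infinite}

/-- The exponent `w_n^*(ξ)`: the supremum of the real numbers `w` such that
`0 < |ξ - α| ≤ H(α)^{-w-1}` for infinitely many algebraic `α` of degree at most `n`. -/
def wStarExp (v : L Fq → ℝ) (n : ℕ) (ξ : K Fq) : EReal :=
  sSup {x : EReal | ∃ w : ℝ, x = (w : EReal) ∧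
    {α : L Fq | IsAlgElem Fq α ∧ degAlg Fq α ≤ n ∧ 0 < v (toL Fq ξ - α) ∧
      v (toL Fq ξ - α) ≤ heightAlg Fq α ^ (-w - 1)}.Infinite}

/-- `pSeq a n = p_{n-1}`, the numerators of the convergents of `[a 0; a 1, a 2, …]`
(with `p_{-1} = 1`). -/
def pSeq (a : ℕ → Polynomial Fq) : ℕ → Polynomial Fq
  | 0 => 1
  | 1 => a 0
  | (n+2) => a (n+1) * pSeq a (n+1) + pSeq a n

/-- `qSeq a n = q_{n-1}`, the denominators of the convergents of `[a 0; a 1, a 2, …]`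
(with `q_{-1} = 0`). -/
def qSeq (a : ℕ → Polynomial Fq) : ℕ → Polynomial Fq
  | 0 => 0
  | 1 => 1
  | (n+2) => a (n+1) * qSeq a (n+1) + qSeq a n

/-- `ξ` has continued fraction expansion `[a 0; a 1, a 2, …]`: each partial quotient `a n`
(`n ≥ 1`) has degree at least one and `|ξ - p_n/q_n| = |q_n|⁻¹|q_{n+1}|⁻¹` for all `n ≥ 0`. -/
def IsCFOf (ξ : K Fq) (a : ℕ → Polynomial Fq) : Prop :=
  (∀ n, 1 ≤ n → 1 ≤ (a n).natDegree) ∧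
  ∀ n : ℕ,
    kabs Fq (ξ - polyToK Fq (pSeq Fq a (n+1)) / polyToK Fq (qSeq Fq a (n+1))) =
      (kabs Fq (polyToK Fq (qSeq Fq a (n+1))) * kabs Fq (polyToK Fq (qSeq Fq a (n+2))))⁻¹

/-- The sequence of partial quotients of `[0; b 0, b 1, b 2, …]`. -/
def cfA (b : ℕ → Polynomial Fq) : ℕ → Polynomial Fq := fun n => if n = 0 then 0 else b (n - 1)

/-- `qden b n` is the denominator `q_n` of the `n`-th convergent of `[0; b 0, b 1, …]`. -/
def qden (b : ℕ → Polynomial Fq) (n : ℕ) : Polynomial Fq := qSeq Fq (cfA Fq b) (n + 1)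

/-- `V^w` for a finite word `V` and a real `w ≥ 0`: `⌊w⌋` copies of `V` followed by the prefix
of `V` of length `⌈(w - ⌊w⌋)|V|⌉`. -/
def wordPow {A : Type*} (V : List A) (w : ℝ) : List A :=
  (List.replicate ⌊w⌋₊ V).flatten ++ V.take ⌈(w - ⌊w⌋₊) * V.length⌉₊

/-- The finite word `l` is a prefix of the infinite word `b`. -/
def IsPrefixOfSeq {A : Type*} (l : List A) (b : ℕ → A) : Prop :=
  ∀ (i : ℕ) (h : i < l.length), l.get ⟨i, h⟩ = b i

/-- Condition `(*)_ρ` for an infinite word. -/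
def SatisfiesCond {A : Type*} (b : ℕ → A) (ρ : ℝ) : Prop :=
  ∃ (U V : ℕ → List A) (w : ℕ → ℝ),
    (∀ n, V n ≠ []) ∧ (∀ n, 0 ≤ w n) ∧
    (∀ n, IsPrefixOfSeq (U n ++ wordPow (V n) (w n)) b) ∧
    (∀ n, ρ * (((U n).length + (V n).length : ℕ) : ℝ) ≤
      (((U n).length + (wordPow (V n) (w n)).length : ℕ) : ℝ)) ∧
    StrictMono fun n => (wordPow (V n) (w n)).length

/-- The Diophantine exponent of an infinite word: the supremum of the `ρ` such that the word
satisfies Condition `(*)_ρ`. -/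
def dioExp {A : Type*} (b : ℕ → A) : EReal :=
  sSup {x : EReal | ∃ ρ : ℝ, x = (ρ : EReal) ∧ SatisfiesCond b ρ}

/-- The complexity function: the number of distinct blocks of `n` consecutive letters. -/
def complexity {A : Type*} (b : ℕ → A) (n : ℕ) : ℕ∞ :=
  {w : Fin n → A | ∃ i : ℕ, ∀ k : Fin n, w k = b (i + k)}.encard

/-- The infinite word `b` is ultimately periodic. -/
def UltimatelyPeriodic {A : Type*} (b : ℕ → A) : Prop :=
  ∃ N T : ℕ, 0 < T ∧ ∀ n, N ≤ n → b (n + T) = b n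


section Helpers

variable {Fq}

lemma polyToK_coeff (a : Polynomial Fq) (k : ℕ) :
    (polyToK Fq a).coeff (-(k : ℤ)) = a.coeff k := by
  induction a using Polynomial.induction_on' with
  | add p q hp hq => simp [hp, hq]
  | monomial m c =>
    have h : polyToK Fq (monomial m c) = HahnSeries.single (-(m : ℤ)) c := by
      simp only [polyToK, TT, coe_eval₂RingHom, eval₂_monomial, HahnSeries.single_pow]
      rw [HahnSeries.C_apply, HahnSeries.single_mul_single]
      simp
    rw [h, HahnSeries.coeff_single, coeff_monomial]
    by_cases hk : m = k
    · simp [hk]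
    · rw [if_neg (by omega), if_neg hk]

lemma polyToK_ne_zero {a : Polynomial Fq} (ha : a ≠ 0) : polyToK Fq a ≠ 0 := by
  intro h
  apply ha
  ext k
  rw [← polyToK_coeff, h]
  simp

lemma polyToK_order {a : Polynomial Fq} (ha : a ≠ 0) :
    (polyToK Fq a).order = -(a.natDegree : ℤ) := by
  have h1 : (polyToK Fq a).order ≤ -(a.natDegree : ℤ) := by
    apply HahnSeries.order_le_of_coeff_ne_zero
    rw [polyToK_coeff]
    simpa using ha
  have h2 := (HahnSeries.coeff_order_eq_zero (x := polyToK Fq a)).not.2 (polyToK_ne_zero ha)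
  obtain ⟨j, hj⟩ : ∃ j : ℕ, (polyToK Fq a).order = -(j : ℤ) :=
    ⟨(-(polyToK Fq a).order).toNat, by omega⟩
  rw [hj, polyToK_coeff] at h2
  have := le_natDegree_of_ne_zero h2
  omega

lemma card_gt_one : (1 : ℝ) < Fintype.card Fq := by
  exact_mod_cast Fintype.one_lt_card

lemma kabs_polyToK {a : Polynomial Fq} (ha : a ≠ 0) :
    kabs Fq (polyToK Fq a) = (Fintype.card Fq : ℝ) ^ a.natDegree := by
  rw [kabs, if_neg (polyToK_ne_zero ha), polyToK_order ha]
  simp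

lemma one_le_kabs {a : Polynomial Fq} (ha : a ≠ 0) : 1 ≤ kabs Fq (polyToK Fq a) := by
  rw [kabs_polyToK ha]
  exact one_le_pow₀ card_gt_one.le

lemma φ_injective : Function.Injective (φ Fq) := by
  rw [injective_iff_map_eq_zero]
  intro a ha
  by_contra h
  exact polyToK_ne_zero h ((map_eq_zero (toL Fq)).1 ha)

lemma bdd_H (P : Polynomial (Polynomial Fq)) :
    BddAbove (Set.range fun i : ℕ => kabs Fq (polyToK Fq (P.coeff i))) := by
  apply Set.Finite.bddAbove
  apply Set.Finite.subset ((Set.finite_singleton (0 : ℝ)).union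
    ((Set.finite_Iic P.natDegree).image fun i : ℕ => kabs Fq (polyToK Fq (P.coeff i))))
  rintro _ ⟨i, rfl⟩
  by_cases hi : i ≤ P.natDegree
  · exact Or.inr ⟨i, hi, rfl⟩
  · left
    simp [coeff_eq_zero_of_natDegree_lt (not_le.1 hi), kabs]

lemma coeff_le_H (P : Polynomial (Polynomial Fq)) (i : ℕ) :
    kabs Fq (polyToK Fq (P.coeff i)) ≤ Hpoly Fq P := le_ciSup (bdd_H P) i

lemma one_le_H {P : Polynomial (Polynomial Fq)} (hP : P ≠ 0) : 1 ≤ Hpoly Fq P :=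
  (one_le_kabs (leadingCoeff_ne_zero.2 hP)).trans (coeff_le_H P P.natDegree)

lemma northcott (n : ℕ) (B : ℝ) :
    {P : Polynomial (Polynomial Fq) | P.natDegree ≤ n ∧ Hpoly Fq P ≤ B}.Finite := by
  obtain ⟨m, hm⟩ := pow_unbounded_of_one_lt B (card_gt_one (Fq := Fq))
  let f : Polynomial (Polynomial Fq) → (Fin (n + 1) → Fin (m + 1) → Fq) :=
    fun P i j => (P.coeff i).coeff j
  apply Set.Finite.of_finite_image (f := f) (Set.toFinite _)
  have key : ∀ P : Polynomial (Polynomial Fq), Hpoly Fq P ≤ B → ∀ i,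
      (P.coeff i).natDegree ≤ m := by
    intro P hP i
    by_cases h0 : P.coeff i = 0
    · simp [h0]
    · have h1 := coeff_le_H P i
      rw [kabs_polyToK h0] at h1
      exact ((pow_lt_pow_iff_right₀ (card_gt_one (Fq := Fq))).1
        (lt_of_le_of_lt (h1.trans hP) hm)).le
  rintro P ⟨hP1, hP2⟩ Q ⟨hQ1, hQ2⟩ h
  ext i j
  by_cases hi : i ≤ n
  · by_cases hj : j ≤ m
    · exact congrFun (congrFun h ⟨i, by omega⟩) ⟨j, by omega⟩
    · rw [coeff_eq_zero_of_natDegree_lt (lt_of_le_of_lt (key P hP2 i) (by omega)),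
        coeff_eq_zero_of_natDegree_lt (lt_of_le_of_lt (key Q hQ2 i) (by omega))]
  · rw [coeff_eq_zero_of_natDegree_lt (show P.natDegree < i by omega),
      coeff_eq_zero_of_natDegree_lt (show Q.natDegree < i by omega)]

lemma minPolyPrim_spec {α : L Fq} (h : IsAlgElem Fq α) :
    IsMinPolyOf Fq (minPolyPrim Fq α) α := by
  rw [minPolyPrim, dif_pos h]
  exact h.choose_spec

omit [Fintype Fq] in
lemma common_root_gen {E : Type*} [Field E] {R : Type*} [Field R] [Algebra (Polynomial Fq) R]
    [IsFractionRing (Polynomial Fq) R] (f : Polynomial Fq →+* E) (hf : Function.Injective f)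
    {Q P : Polynomial (Polynomial Fq)} (hQ : Irreducible Q) (hQ' : Q.IsPrimitive)
    {r s : E} (h1 : eval₂ f r Q = 0) (h2 : eval₂ f r P = 0) (h3 : eval₂ f s Q = 0) :
    eval₂ f s P = 0 := by
  classical
  obtain ⟨ψ, hψ⟩ : ∃ ψ : R →+* E, ψ.comp (algebraMap (Polynomial Fq) R) = f :=
    ⟨IsFractionRing.lift hf, RingHom.ext fun x => IsFractionRing.lift_algebraMap hf x⟩
  rw [← hψ, ← eval₂_map] at h1 h2 h3 ⊢
  have hirr : Irreducible (Q.map (algebraMap (Polynomial Fq) R)) :=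
    (hQ'.irreducible_iff_irreducible_map_fraction_map (K := R)).1 hQ
  rcases EuclideanDomain.dvd_or_coprime _ (P.map (algebraMap (Polynomial Fq) R)) hirr with
    ⟨c, hc⟩ | hc
  · rw [hc, eval₂_mul, h3, zero_mul]
  · obtain ⟨a, b, hab⟩ := hc
    have := congrArg (eval₂ ψ r) hab
    rw [eval₂_add, eval₂_mul, eval₂_mul, h1, h2] at this
    simp at this

lemma common_root {Q P : Polynomial (Polynomial Fq)} (hQ : Irreducible Q) (hQ' : Q.IsPrimitive)
    {r s : L Fq} (h1 : evalL Fq Q r = 0) (h2 : evalL Fq P r = 0) (h3 : evalL Fq Q s = 0) :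
    evalL Fq P s = 0 :=
  common_root_gen (R := FractionRing (Polynomial Fq)) (φ Fq) φ_injective hQ hQ' h1 h2 h3

variable {v : L Fq → ℝ} (hv : IsAbsExt Fq v)
include hv

lemma v_one : v 1 = 1 := by
  have h1 := hv.map_mul 1 1
  have h2 : v 1 ≠ 0 := fun h => one_ne_zero ((hv.eq_zero_iff 1).1 h)
  rw [mul_one] at h1
  exact (mul_left_cancel₀ h2 (by rw [mul_one]; exact h1)).symm

lemma v_neg (x : L Fq) : v (-x) = v x := by
  have h : v (-1) * v (-1) = 1 := by rw [← hv.map_mul]; simp [v_one hv]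
  have h' : v (-1) = 1 := by nlinarith [hv.nonneg (-1)]
  rw [neg_eq_neg_one_mul, hv.map_mul, h', one_mul]

lemma v_sub (x y : L Fq) : v (x - y) ≤ max (v x) (v y) := by
  rw [sub_eq_add_neg, ← v_neg hv y]
  exact hv.add_le _ _

/-- `v` as a monoid homomorphism. -/
def vHom : L Fq →* ℝ := ⟨⟨v, v_one hv⟩, hv.map_mul⟩

lemma v_pow (x : L Fq) (k : ℕ) : v (x ^ k) = v x ^ k := map_pow (vHom hv) x k

lemma v_sum (s : Finset ℕ) (f : ℕ → L Fq) (B : ℝ) (hB : 0 ≤ B) (h : ∀ i ∈ s, v (f i) ≤ B) :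
    v (∑ i ∈ s, f i) ≤ B := by
  classical
  induction s using Finset.induction_on with
  | empty => simpa [(hv.eq_zero_iff 0).2 rfl] using hB
  | insert a s ha ih =>
    rw [Finset.sum_insert ha]
    refine (hv.add_le _ _).trans (max_le (h a (by simp)) (ih fun i hi => h i (by simp [hi])))

lemma v_φ (a : Polynomial Fq) : v (φ Fq a) = kabs Fq (polyToK Fq a) := hv.extends_kabs _

lemma H_nonneg (P : Polynomial (Polynomial Fq)) : 0 ≤ Hpoly Fq P :=
  le_trans (by rw [← v_φ hv]; exact hv.nonneg _) (coeff_le_H P 0)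

lemma v_evalL_le {n : ℕ} {P : Polynomial (Polynomial Fq)} (hP : P.natDegree ≤ n) (x : L Fq) :
    v (evalL Fq P x) ≤ Hpoly Fq P * max 1 (v x) ^ n := by
  rw [evalL, eval₂_eq_sum_range' (φ Fq) (Nat.lt_succ_of_le hP)]
  have hH := H_nonneg hv P
  apply v_sum hv _ _ _ (by positivity)
  intro i hi
  rw [hv.map_mul, v_φ hv, v_pow hv]
  refine mul_le_mul (coeff_le_H P i) ?_ (pow_nonneg (hv.nonneg _) _) hH
  calc v x ^ i ≤ max 1 (v x) ^ i := pow_le_pow_left₀ (hv.nonneg _) (le_max_right _ _) _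
    _ ≤ _ := pow_le_pow_right₀ (le_max_left _ _) (by simpa [Nat.lt_succ_iff] using hi)

lemma v_pow_sub {x y : L Fq} {M : ℝ} (h1 : 1 ≤ M) (hx : v x ≤ M) (hy : v y ≤ M) (i : ℕ) :
    v (x ^ i - y ^ i) ≤ v (x - y) * M ^ i := by
  have hxy := hv.nonneg (x - y)
  induction i with
  | zero => simpa [(hv.eq_zero_iff 0).2 rfl] using hxy
  | succ i ih =>
    have e : x ^ (i + 1) - y ^ (i + 1) = (x ^ i - y ^ i) * x + (x - y) * y ^ i := by ring
    rw [e]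
    refine (hv.add_le _ _).trans (max_le ?_ ?_)
    · rw [hv.map_mul, pow_succ, ← mul_assoc]
      exact mul_le_mul ih hx (hv.nonneg _) (by positivity)
    · rw [hv.map_mul, v_pow hv]
      refine mul_le_mul_of_nonneg_left ?_ hxy
      exact (pow_le_pow_left₀ (hv.nonneg _) hy _).trans (pow_le_pow_right₀ h1 (by omega))

lemma v_evalL_sub {n : ℕ} {P : Polynomial (Polynomial Fq)} (hP : P.natDegree ≤ n)
    {x y : L Fq} {M : ℝ} (h1 : 1 ≤ M) (hx : v x ≤ M) (hy : v y ≤ M) :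
    v (evalL Fq P x - evalL Fq P y) ≤ Hpoly Fq P * (v (x - y) * M ^ n) := by
  rw [evalL, evalL, eval₂_eq_sum_range' (φ Fq) (Nat.lt_succ_of_le hP),
    eval₂_eq_sum_range' (φ Fq) (Nat.lt_succ_of_le hP), ← Finset.sum_sub_distrib]
  have hH := H_nonneg hv P
  have hxy := hv.nonneg (x - y)
  apply v_sum hv _ _ _ (by positivity)
  intro i hi
  rw [← mul_sub, hv.map_mul, v_φ hv]
  refine mul_le_mul (coeff_le_H P i) ((v_pow_sub hv h1 hx hy i).trans ?_) (hv.nonneg _) hH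
  exact mul_le_mul_of_nonneg_left
    (pow_le_pow_right₀ h1 (by simpa [Nat.lt_succ_iff] using hi)) hxy

/-- Liouville's inequality. -/
lemma liouville {x : L Fq} (hx : IsAlgElem Fq x) (n : ℕ) :
    ∃ C : ℝ, 0 < C ∧ ∀ P : Polynomial (Polynomial Fq), P.natDegree ≤ n → evalL Fq P x ≠ 0 →
      1 ≤ C * Hpoly Fq P ^ (degAlg Fq x - 1) * v (evalL Fq P x) := by
  classical
  obtain ⟨hQ1, hQ2, hQ3, hQ4, hQ5⟩ := minPolyPrim_spec hx
  rw [degAlg]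
  generalize minPolyPrim Fq x = Q at *
  have hQ0 : Q ≠ 0 := hQ2.ne_zero
  have hQm : Q.map (φ Fq) ≠ 0 := (Polynomial.map_ne_zero_iff φ_injective).2 hQ0
  have hdeg : (Q.map (φ Fq)).natDegree = Q.natDegree := natDegree_map_eq_of_injective φ_injective Q
  have hspl : (Q.map (φ Fq)).Splits := IsAlgClosed.splits _
  have hxr : x ∈ (Q.map (φ Fq)).roots := by
    rw [mem_roots hQm, IsRoot, eval_map]; exact hQ5
  obtain ⟨s, hs⟩ := Multiset.exists_cons_of_mem hxr
  have hcard : s.card = Q.natDegree - 1 := by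
    have := hspl.natDegree_eq_card_roots
    rw [hdeg, hs, Multiset.card_cons] at this
    omega
  have hlc : (Q.map (φ Fq)).leadingCoeff ≠ 0 := leadingCoeff_ne_zero.2 hQm
  have hvlc : 0 < v (Q.map (φ Fq)).leadingCoeff :=
    lt_of_le_of_ne (hv.nonneg _) fun h => hlc ((hv.eq_zero_iff _).1 h.symm)
  have hM : 0 < (s.map fun r => max 1 (v r) ^ n).prod := by
    apply Multiset.prod_pos
    intro a ha
    obtain ⟨r, -, rfl⟩ := Multiset.mem_map.1 ha
    positivity
  refine ⟨v (Q.map (φ Fq)).leadingCoeff ^ n * (s.map fun r => max 1 (v r) ^ n).prod,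
    by positivity, ?_⟩
  intro P hP hPx
  have hres := resultant_eq_prod_eval (Q.map (φ Fq)) (P.map (φ Fq)) n
    (natDegree_map_le.trans hP) hspl
  rw [resultant_map_map] at hres
  have hroot : ∀ r ∈ (Q.map (φ Fq)).roots, evalL Fq Q r = 0 := by
    intro r hr
    rw [mem_roots hQm, IsRoot, eval_map] at hr
    exact hr
  have hev : (fun r => (P.map (φ Fq)).eval r) = fun r => evalL Fq P r := by
    funext r; rw [eval_map, evalL]
  have hprod : ((Q.map (φ Fq)).roots.map fun r => evalL Fq P r).prod ≠ 0 := by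
    apply Multiset.prod_ne_zero
    intro h0
    obtain ⟨r, hr, hr0⟩ := Multiset.mem_map.1 h0
    exact hPx (common_root hQ2 hQ3 (hroot r hr) hr0 hQ5)
  have h1 : 1 ≤ v ((Q.map (φ Fq)).leadingCoeff ^ n *
      ((Q.map (φ Fq)).roots.map fun r => evalL Fq P r).prod) := by
    have hne := mul_ne_zero (pow_ne_zero n hlc) hprod
    change _ = _ * (Multiset.map (fun r => (P.map (φ Fq)).eval r) _).prod at hres
    rw [hev] at hres
    rw [← hres] at hne ⊢
    rw [v_φ hv]
    apply one_le_kabs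
    intro h
    exact hne (by rw [h, map_zero])
  have hvprod : ∀ t : Multiset (L Fq), v (t.map fun r => evalL Fq P r).prod =
      (t.map fun r => v (evalL Fq P r)).prod := by
    intro t
    have := map_multiset_prod (vHom hv) (t.map fun r => evalL Fq P r)
    rw [Multiset.map_map] at this
    exact this
  rw [hs, hv.map_mul, v_pow hv, hvprod, Multiset.map_cons, Multiset.prod_cons] at h1
  have hle : (s.map fun r => v (evalL Fq P r)).prod ≤
      Hpoly Fq P ^ (Q.natDegree - 1) * (s.map fun r => max 1 (v r) ^ n).prod := by
    calc _ ≤ (s.map fun r => Hpoly Fq P * max 1 (v r) ^ n).prod :=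
          Multiset.prod_map_le_prod_map₀ _ _ (fun r _ => hv.nonneg _)
            (fun r _ => v_evalL_le hv hP r)
      _ = _ := by rw [Multiset.prod_map_mul, Multiset.map_const', Multiset.prod_replicate, hcard]
  calc 1 ≤ _ := h1
    _ ≤ v (Q.map (φ Fq)).leadingCoeff ^ n * (v (evalL Fq P x) *
        (Hpoly Fq P ^ (Q.natDegree - 1) * (s.map fun r => max 1 (v r) ^ n).prod)) := by
        have := hv.nonneg (evalL Fq P x)
        gcongr
    _ = _ := by ring

omit hv in
/-- Heights satisfying `1 ≤ C H^a H^{-b}` with `a < b` are bounded. -/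
lemma height_bound {C H a b : ℝ} (hC : 0 < C) (hH : 1 ≤ H) (hab : a < b)
    (h : 1 ≤ C * H ^ a * H ^ (-b)) : H ≤ C ^ (b - a)⁻¹ := by
  have hH0 : 0 < H := by linarith
  have h2 : H ^ (b - a) ≤ C := by
    have e : H ^ (b - a) * (H ^ a * H ^ (-b)) = 1 := by
      rw [← Real.rpow_add hH0, ← Real.rpow_add hH0]
      ring_nf
      simp
    have hp : 0 < H ^ (b - a) := Real.rpow_pos_of_pos hH0 _
    calc H ^ (b - a) ≤ H ^ (b - a) * (C * H ^ a * H ^ (-b)) := le_mul_of_one_le_right hp.le h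
      _ = C * (H ^ (b - a) * (H ^ a * H ^ (-b))) := by ring
      _ = C := by rw [e, mul_one]
  rw [Real.le_rpow_inv_iff_of_pos hH0.le hC.le (by linarith)]
  exact h2

omit hv in
lemma evalL_toL (P : Polynomial (Polynomial Fq)) (ξ : K Fq) :
    evalL Fq P (toL Fq ξ) = toL Fq (evalK Fq P ξ) := by
  rw [evalL, evalK, φ, hom_eval₂]

end Helpers

theorem stmt15 (Fq : Type) [Field Fq] [Fintype Fq]
    (v : L Fq → ℝ) (hv : IsAbsExt Fq v)
    (n : ℕ) (hn : 1 ≤ n) (ξ : K Fq) (d : ℕ)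
    (halg : IsAlgElem Fq (toL Fq ξ)) (hd : degAlg Fq (toL Fq ξ) = d) :
    wExp Fq n ξ ≤ (((d : ℝ) - 1 : ℝ) : EReal) ∧
    wStarExp Fq v n ξ ≤ (((d : ℝ) - 1 : ℝ) : EReal) := by
  have hdpos : 0 < d := hd ▸ (minPolyPrim_spec halg).1
  have hd1 : (1 : ℝ) ≤ d := by exact_mod_cast hdpos
  obtain ⟨C, hC, hL⟩ := liouville hv halg n
  rw [hd] at hL
  constructor
  · apply sSup_le
    rintro _ ⟨w, rfl, hinf⟩
    rw [EReal.coe_le_coe_iff]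
    by_contra hw
    push Not at hw
    refine hinf ((northcott n (C ^ (w - ((d : ℝ) - 1))⁻¹)).subset ?_)
    rintro P ⟨hP, h0, hle⟩
    refine ⟨hP, ?_⟩
    have hve : v (evalL Fq P (toL Fq ξ)) = kabs Fq (evalK Fq P ξ) := by
      rw [evalL_toL, hv.extends_kabs]
    have hne : evalL Fq P (toL Fq ξ) ≠ 0 := by
      intro h
      rw [h, (hv.eq_zero_iff 0).2 rfl] at hve
      linarith
    have hP0 : P ≠ 0 := by
      rintro rfl
      simp [evalL] at hne
    have h1H := one_le_H hP0
    have h := hL P hP hne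
    rw [hve] at h
    apply height_bound hC h1H hw
    refine h.trans ?_
    have e : Hpoly Fq P ^ ((d : ℝ) - 1) = Hpoly Fq P ^ (d - 1) := by
      rw [← Real.rpow_natCast, Nat.cast_sub hdpos]; simp
    rw [e]
    exact mul_le_mul_of_nonneg_left hle (by positivity)
  · apply sSup_le
    rintro _ ⟨w, rfl, hinf⟩
    rw [EReal.coe_le_coe_iff]
    by_contra hw
    push Not at hw
    set M : ℝ := max 1 (v (toL Fq ξ)) with hM
    have hM1 : 1 ≤ M := le_max_left _ _
    set B : ℝ := (C * M ^ n) ^ ((w + 1) - (d : ℝ))⁻¹ with hB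
    set S : Set (Polynomial (Polynomial Fq)) :=
      insert (minPolyPrim Fq (toL Fq ξ)) {P | P.natDegree ≤ n ∧ Hpoly Fq P ≤ B} with hS
    have hSfin : S.Finite := (northcott n B).insert _
    have hfin : (⋃ P ∈ S, {α : L Fq | α ∈ (P.map (φ Fq)).roots}).Finite := by
      refine hSfin.biUnion fun P _ => ?_
      classical
      exact ((P.map (φ Fq)).roots.toFinset.finite_toSet).subset fun α hα => by simpa using hα
    refine hinf (hfin.subset ?_)
    rintro α ⟨hα, hdeg, hpos, hle⟩
    have hP := minPolyPrim_spec hα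
    rw [degAlg] at hdeg
    rw [heightAlg] at hle
    generalize minPolyPrim Fq α = P at *
    obtain ⟨-, hP2, hP3, -, hP5⟩ := hP
    have hroot : ∀ Q : Polynomial (Polynomial Fq), Q ≠ 0 → evalL Fq Q α = 0 →
        α ∈ (Q.map (φ Fq)).roots := by
      intro Q hQ h
      rw [mem_roots ((Polynomial.map_ne_zero_iff φ_injective).2 hQ), IsRoot, eval_map]
      exact h
    simp only [Set.mem_iUnion]
    obtain ⟨-, hQ2, -, -, hQ5⟩ := minPolyPrim_spec halg
    by_cases hne : evalL Fq P (toL Fq ξ) = 0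
    · refine ⟨_, Set.mem_insert _ _, hroot _ hQ2.ne_zero ?_⟩
      exact common_root hP2 hP3 hne hQ5 hP5
    · refine ⟨P, Set.mem_insert_of_mem _ ⟨hdeg, ?_⟩, hroot P hP2.ne_zero hP5⟩
      have h1H := one_le_H hP2.ne_zero
      have hsmall : v (toL Fq ξ - α) ≤ 1 :=
        hle.trans (Real.rpow_le_one_of_one_le_of_nonpos h1H (by linarith))
      have hαM : v α ≤ M := by
        have e : α = toL Fq ξ - (toL Fq ξ - α) := by ring
        rw [e]
        exact (v_sub hv _ _).trans (max_le (le_max_right _ _) (hsmall.trans hM1))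
      have h := hL P hdeg hne
      have h2 := v_evalL_sub hv hdeg hM1 (le_max_right _ _) hαM (x := toL Fq ξ)
      rw [hP5, sub_zero] at h2
      apply height_bound (a := (d : ℝ)) (by positivity) h1H (by linarith)
      have e : Hpoly Fq P ^ (d : ℝ) = Hpoly Fq P ^ (d - 1) * Hpoly Fq P := by
        rw [Real.rpow_natCast, ← pow_succ, Nat.sub_add_cancel hdpos]
      rw [e, show -(w + 1) = -w - 1 by ring]
      calc 1 ≤ _ := h
        _ ≤ C * Hpoly Fq P ^ (d - 1) *
            (Hpoly Fq P * (Hpoly Fq P ^ (-w - 1) * M ^ n)) := by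
            refine mul_le_mul_of_nonneg_left (h2.trans ?_) (by positivity)
            gcongr
        _ = _ := by ring

end Ooto
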